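/- arXiv:1912.05624 — 3 statements merged into one kernel-verified Lean document; each statement's English description precedes it below -/
import Mathlib

section
/- Let β > -1 and define J(x) = ∫_0^∞ e^{-η^2} η^β cos(xη) dη. Then there exists a constant C depending only on β such that |J(x)| ≤ C · min(1, |x|^{-(β+1)}) for all x ∈ ℝ. -/
open MeasureTheory Real Set

/-!
For `f` nonincreasing and nonnegative on `(0, ∞)`, translating by the half period `π / x` flips the
sign of `e^{ixt}`; comparing the Fourier integral of `f` with its translate bounds it by
`∫_0^{π/x} f`. For `f(t) = t^β e^{-bt²}` with `-1 < β ≤ 0` this is at most a constant times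
`x^{-(β+1)}`.

For `β > 0`, integration by parts expresses `x` times the Fourier integral with exponent `β` through
those with exponents `β - 1` and `β + 1`. The exponent `β + 1` goes up instead of down, so one does
not induct on `β`: one proves decay of order `s` for all `s ≤ β + 1` simultaneously in `β`, by
induction on an integer `n ≥ s`, and each integration by parts needs only order `s - 1`.
-/

open Filter Topology Asymptotics

section FourierIntegralOn

/-- The Fourier integral `∫_s f(t) e^{ixt} dt` of a real function `f` over a set `s`, normalised
without `2π` so that its real part is the cosine integral of `f`. -/
noncomputable def fourierIntegralOn (s : Set ℝ) (f : ℝ → ℝ) (x : ℝ) : ℂ :=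
  ∫ t in s, (f t : ℂ) * Complex.exp ((x * t : ℝ) * Complex.I)

variable {s : Set ℝ} {f g : ℝ → ℝ}

lemma integrableOn_ofReal_mul_cexp (hf : IntegrableOn f s) (x : ℝ) :
    IntegrableOn (fun t => (f t : ℂ) * Complex.exp ((x * t : ℝ) * Complex.I)) s :=
  hf.ofReal.mul_bdd (c := 1) (Continuous.aestronglyMeasurable (by fun_prop))
    (.of_forall fun t => (Complex.norm_exp_ofReal_mul_I (x * t)).le)

lemma fourierIntegralOn_const_mul (c x : ℝ) :
    fourierIntegralOn s (fun t => c * f t) x = c * fourierIntegralOn s f x := by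
  simp only [fourierIntegralOn, Complex.ofReal_mul, mul_assoc, integral_const_mul]

lemma fourierIntegralOn_sub (hf : IntegrableOn f s) (hg : IntegrableOn g s) (x : ℝ) :
    fourierIntegralOn s (fun t => f t - g t) x
      = fourierIntegralOn s f x - fourierIntegralOn s g x := by
  simp only [fourierIntegralOn, Complex.ofReal_sub, sub_mul]
  exact integral_sub (integrableOn_ofReal_mul_cexp hf x) (integrableOn_ofReal_mul_cexp hg x)

lemma re_fourierIntegralOn (hf : IntegrableOn f s) (x : ℝ) :
    (fourierIntegralOn s f x).re = ∫ t in s, f t * cos (x * t) := by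
  rw [fourierIntegralOn, ← RCLike.re_to_complex, ← integral_re (integrableOn_ofReal_mul_cexp hf x)]
  simp only [RCLike.re_to_complex, Complex.re_ofReal_mul, Complex.exp_ofReal_mul_I_re]

lemma abs_integral_mul_cos_le_norm_fourierIntegralOn (hf : IntegrableOn f s) (x : ℝ) :
    |∫ t in s, f t * cos (x * t)| ≤ ‖fourierIntegralOn s f |x|‖ := by
  have hcos (t : ℝ) : cos (x * t) = cos (|x| * t) := by
    rw [← cos_abs (x * t), ← cos_abs (|x| * t), abs_mul, abs_mul, abs_abs]
  simp only [hcos, ← re_fourierIntegralOn hf]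
  exact Complex.abs_re_le_norm _

lemma norm_fourierIntegralOn_le (hs : MeasurableSet s) (hf : ∀ t ∈ s, 0 ≤ f t) (x : ℝ) :
    ‖fourierIntegralOn s f x‖ ≤ ∫ t in s, f t := by
  refine (norm_integral_le_integral_norm _).trans_eq (setIntegral_congr_fun hs fun t ht => ?_)
  simp only [norm_mul, Complex.norm_exp_ofReal_mul_I, mul_one, Complex.norm_of_nonneg (hf t ht)]

end FourierIntegralOn

section Translation

variable {E : Type*} [NormedAddCommGroup E] {f : ℝ → E}

lemma integrableOn_Ioi_comp_add_right {a h : ℝ} (hf : IntegrableOn f (Ioi (a + h))) :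
    IntegrableOn (fun t => f (t + h)) (Ioi a) := by
  simpa [Function.comp_def] using ((measurePreserving_add_right volume h).integrableOn_comp_preimage
    (measurableEmbedding_addRight h)).2 hf

lemma setIntegral_Ioi_comp_add_right [NormedSpace ℝ E] (f : ℝ → E) (a h : ℝ) :
    ∫ t in Ioi a, f (t + h) = ∫ t in Ioi (a + h), f t := by
  simpa using (measurePreserving_add_right volume h).setIntegral_preimage_emb
    (measurableEmbedding_addRight h) f (Ioi (a + h))

lemma setIntegral_Ioc_add_setIntegral_Ioi_comp_add_right [NormedSpace ℝ E] {a h : ℝ}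
    (hf : IntegrableOn f (Ioi a)) (hh : 0 ≤ h) :
    (∫ t in Ioc a (a + h), f t) + ∫ t in Ioi a, f (t + h) = ∫ t in Ioi a, f t := by
  have hle : a ≤ a + h := le_add_of_nonneg_right hh
  rw [setIntegral_Ioi_comp_add_right, ← intervalIntegral.integral_of_le hle,
    intervalIntegral.integral_interval_add_Ioi hf (hf.mono_set (Ioi_subset_Ioi hle))]

end Translation

section Antitone

variable {f : ℝ → ℝ} {a x : ℝ}

lemma fourierIntegralOn_Ioi_eq_sub_comp_add_half_period (hf : IntegrableOn f (Ioi a))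
    (hx : 0 < x) :
    fourierIntegralOn (Ioi a) f x
      = fourierIntegralOn (Ioc a (a + π / x)) f x
        - fourierIntegralOn (Ioi a) (fun t => f (t + π / x)) x := by
  have hsign (t : ℝ) : Complex.exp ((x * (t + π / x) : ℝ) * Complex.I)
      = -Complex.exp ((x * t : ℝ) * Complex.I) := by
    rw [mul_add, mul_div_cancel₀ π hx.ne', Complex.ofReal_add, add_mul, Complex.exp_add,
      Complex.exp_pi_mul_I, mul_neg_one]
  have hsplit := setIntegral_Ioc_add_setIntegral_Ioi_comp_add_right
    (integrableOn_ofReal_mul_cexp hf x) (div_pos pi_pos hx).le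
  simp only [hsign, mul_neg, integral_neg, ← sub_eq_add_neg] at hsplit
  exact hsplit.symm

lemma norm_fourierIntegralOn_Ioi_le_of_antitoneOn (hf : IntegrableOn f (Ioi a))
    (hanti : AntitoneOn f (Ioi a)) (hnonneg : ∀ t ∈ Ioi a, 0 ≤ f t) (hx : 0 < x) :
    ‖fourierIntegralOn (Ioi a) f x‖ ≤ ∫ t in Ioc a (a + π / x), f t := by
  have hh : 0 ≤ π / x := (div_pos pi_pos hx).le
  have hshift : IntegrableOn (fun t => f (t + π / x)) (Ioi a) :=
    integrableOn_Ioi_comp_add_right (hf.mono_set (Ioi_subset_Ioi (le_add_of_nonneg_right hh)))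
  have htwo : 2 * fourierIntegralOn (Ioi a) f x
      = fourierIntegralOn (Ioi a) (fun t => f t - f (t + π / x)) x
        + fourierIntegralOn (Ioc a (a + π / x)) f x := by
    rw [fourierIntegralOn_sub hf hshift]
    linear_combination fourierIntegralOn_Ioi_eq_sub_comp_add_half_period hf hx
  have hdiff : ‖fourierIntegralOn (Ioi a) (fun t => f t - f (t + π / x)) x‖
      ≤ ∫ t in Ioc a (a + π / x), f t := by
    have hdiff_nonneg : ∀ t ∈ Ioi a, 0 ≤ f t - f (t + π / x) := fun t ht =>
      sub_nonneg.2 (hanti ht (lt_add_of_lt_of_nonneg ht hh) (le_add_of_nonneg_right hh))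
    refine (norm_fourierIntegralOn_le measurableSet_Ioi hdiff_nonneg x).trans_eq ?_
    rw [integral_sub hf hshift, sub_eq_iff_eq_add,
      setIntegral_Ioc_add_setIntegral_Ioi_comp_add_right hf hh]
  have hinitial : ‖fourierIntegralOn (Ioc a (a + π / x)) f x‖ ≤ ∫ t in Ioc a (a + π / x), f t :=
    norm_fourierIntegralOn_le measurableSet_Ioc (fun t ht => hnonneg t ht.1) x
  have hnorm := norm_add_le (fourierIntegralOn (Ioi a) (fun t => f t - f (t + π / x)) x)
    (fourierIntegralOn (Ioc a (a + π / x)) f x)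
  rw [← htwo, norm_mul, Complex.norm_ofNat] at hnorm
  linarith

end Antitone

lemma fourierIntegralOn_Ioi_deriv {f f' : ℝ → ℝ} {a c : ℝ}
    (hderiv : ∀ t ∈ Ioi a, HasDerivAt f (f' t) t) (hf : IntegrableOn f (Ioi a))
    (hf' : IntegrableOn f' (Ioi a)) (hlim : Tendsto f (𝓝[>] a) (𝓝 c)) (x : ℝ) :
    fourierIntegralOn (Ioi a) f' x
      = -c * Complex.exp ((x * a : ℝ) * Complex.I)
        - x * Complex.I * fourierIntegralOn (Ioi a) f x := by
  set e : ℝ → ℂ := fun t => Complex.exp ((x * t : ℝ) * Complex.I) with he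
  have hexp (t : ℝ) : HasDerivAt e (x * Complex.I * e t) t := by
    simpa [he, mul_comm] using
      ((((hasDerivAt_id t).const_mul x).ofReal_comp).mul_const Complex.I).cexp
  have hint := integrableOn_ofReal_mul_cexp hf x
  have hint' := integrableOn_ofReal_mul_cexp hf' x
  have hswap (t : ℝ) : (f t : ℂ) * (x * Complex.I * e t) = x * Complex.I * (f t * e t) := by ring
  have hsum : IntegrableOn (fun t => f' t * e t + f t * (x * Complex.I * e t)) (Ioi a) := by
    simp only [hswap]
    exact hint'.add (hint.const_mul _)
  have hleft : Tendsto (fun t => f t * e t) (𝓝[>] a) (𝓝 (c * e a)) :=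
    ((Complex.continuous_ofReal.tendsto c).comp hlim).mul
      ((hexp a).continuousAt.tendsto.mono_left nhdsWithin_le_nhds)
  have hderiv' : ∀ t ∈ Ioi a, HasDerivAt (fun t => (f t : ℂ)) (f' t) t :=
    fun t ht => (hderiv t ht).ofReal_comp
  have hparts := integral_Ioi_deriv_mul_eq_sub hderiv' (fun t _ => hexp t) hsum hleft
    (tendsto_zero_of_hasDerivAt_of_integrableOn_Ioi
      (fun t ht => (hderiv' t ht).mul (hexp t)) hsum hint)
  simp only [hswap] at hparts
  rw [integral_add hint' (hint.const_mul _), integral_const_mul] at hparts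
  simp only [fourierIntegralOn]
  linear_combination hparts

lemma isBigO_rpow_neg_of_le {s r : ℝ} (h : s ≤ r) :
    (fun x : ℝ => x ^ (-r)) =O[𝓟 (Ici 1)] fun x => x ^ (-s) := by
  refine isBigO_principal.2 ⟨1, fun x (hx : 1 ≤ x) => ?_⟩
  have hx0 : 0 ≤ x := zero_le_one.trans hx
  rw [one_mul, norm_of_nonneg (rpow_nonneg hx0 _), norm_of_nonneg (rpow_nonneg hx0 _)]
  exact rpow_le_rpow_of_exponent_le hx (neg_le_neg h)

lemma isBigO_rpow_neg_of_ofReal_mul {f : ℝ → ℂ} {s : ℝ}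
    (h : (fun x : ℝ => x * f x) =O[𝓟 (Ici 1)] fun x => x ^ (-(s - 1))) :
    f =O[𝓟 (Ici 1)] fun x => x ^ (-s) := by
  have hinv := (isBigO_refl (fun x : ℝ => x⁻¹) (𝓟 (Ici 1))).smul h
  refine hinv.congr' (eventually_principal.2 fun x hx => ?_)
    (eventually_principal.2 fun x hx => ?_)
  · have hx0 : (x : ℂ) ≠ 0 := Complex.ofReal_ne_zero.2 (zero_lt_one.trans_le hx).ne'
    simp only [Complex.real_smul, Complex.ofReal_inv, inv_mul_cancel_left₀ hx0]
  · have hx0 : 0 < x := zero_lt_one.trans_le hx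
    simp only [smul_eq_mul]
    rw [← rpow_neg_one, ← rpow_add hx0]
    ring_nf

section RpowGaussian

/-- The weight `t^β e^{-bt²}` on the half-line, with the factors in the order of Mathlib's Gaussian
integrals. Its values at `t < 0` depend on the convention for real powers of negative numbers. -/
noncomputable def rpowGaussian (b β t : ℝ) : ℝ := t ^ β * exp (-b * t ^ 2)

variable {b β : ℝ}

lemma rpowGaussian_nonneg {t : ℝ} (ht : 0 ≤ t) : 0 ≤ rpowGaussian b β t :=
  mul_nonneg (rpow_nonneg ht β) (exp_pos _).le

lemma integrableOn_rpowGaussian (hb : 0 < b) (hβ : -1 < β) :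
    IntegrableOn (rpowGaussian b β) (Ioi 0) :=
  integrableOn_rpow_mul_exp_neg_mul_sq hb hβ

lemma antitoneOn_rpowGaussian (hb : 0 ≤ b) (hβ : β ≤ 0) :
    AntitoneOn (rpowGaussian b β) (Ioi 0) := fun t (ht : 0 < t) _ _ htu =>
  mul_le_mul (rpow_le_rpow_of_nonpos ht htu hβ)
    (exp_le_exp.2 (mul_le_mul_of_nonpos_left (pow_le_pow_left₀ ht.le htu 2) (neg_nonpos.2 hb)))
    (exp_pos _).le (rpow_nonneg ht.le β)

lemma setIntegral_Ioc_rpowGaussian_le (hb : 0 < b) (hβ : -1 < β) {h : ℝ} (hh : 0 ≤ h) :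
    ∫ t in Ioc 0 h, rpowGaussian b β t ≤ h ^ (β + 1) / (β + 1) := by
  have hrpow : ∫ t in Ioc 0 h, t ^ β = h ^ (β + 1) / (β + 1) := by
    rw [← intervalIntegral.integral_of_le hh, integral_rpow (.inl hβ), zero_rpow (by linarith),
      sub_zero]
  rw [← hrpow]
  refine setIntegral_mono_on ((integrableOn_rpowGaussian hb hβ).mono_set Ioc_subset_Ioi_self)
    ((intervalIntegrable_iff_integrableOn_Ioc_of_le hh).1
      (intervalIntegral.intervalIntegrable_rpow' hβ)) measurableSet_Ioc fun t ht => ?_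
  refine mul_le_of_le_one_right (rpow_nonneg ht.1.le β) (exp_le_one_iff.2 ?_)
  exact mul_nonpos_of_nonpos_of_nonneg (neg_nonpos.2 hb.le) (sq_nonneg t)

lemma hasDerivAt_rpowGaussian (b β : ℝ) {t : ℝ} (ht : t ≠ 0) :
    HasDerivAt (rpowGaussian b β)
      (β * rpowGaussian b (β - 1) t - 2 * b * rpowGaussian b (β + 1) t) t := by
  refine ((hasDerivAt_rpow_const (p := β) (.inl ht)).mul
    (((hasDerivAt_pow 2 t).const_mul (-b)).exp)).congr_deriv ?_
  simp only [rpowGaussian, rpow_add_one ht]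
  push_cast
  ring

lemma continuous_rpowGaussian (b : ℝ) (hβ : 0 ≤ β) : Continuous (rpowGaussian b β) :=
  (continuous_rpow_const hβ).mul (by fun_prop)

lemma mul_fourierIntegralOn_rpowGaussian (hb : 0 < b) (hβ : 0 < β) (x : ℝ) :
    x * fourierIntegralOn (Ioi 0) (rpowGaussian b β) x
      = Complex.I * (β * fourierIntegralOn (Ioi 0) (rpowGaussian b (β - 1)) x
        - (2 * b : ℝ) * fourierIntegralOn (Ioi 0) (rpowGaussian b (β + 1)) x) := by
  have hlower : IntegrableOn (fun t => β * rpowGaussian b (β - 1) t) (Ioi 0) :=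
    (integrableOn_rpowGaussian hb (by linarith)).const_mul β
  have hupper : IntegrableOn (fun t => 2 * b * rpowGaussian b (β + 1) t) (Ioi 0) :=
    (integrableOn_rpowGaussian hb (by linarith)).const_mul (2 * b)
  have hlim : Tendsto (rpowGaussian b β) (𝓝[>] 0) (𝓝 0) := by
    simpa [rpowGaussian, zero_rpow hβ.ne'] using
      ((continuous_rpowGaussian b hβ.le).tendsto 0).mono_left nhdsWithin_le_nhds
  have hparts := fourierIntegralOn_Ioi_deriv
    (fun t (ht : 0 < t) => hasDerivAt_rpowGaussian b β ht.ne')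
    (integrableOn_rpowGaussian hb (by linarith)) (hlower.sub hupper) hlim x
  rw [fourierIntegralOn_sub hlower hupper, fourierIntegralOn_const_mul,
    fourierIntegralOn_const_mul, Complex.ofReal_zero] at hparts
  linear_combination -Complex.I * hparts
    + x * fourierIntegralOn (Ioi 0) (rpowGaussian b β) x * Complex.I_sq

lemma norm_fourierIntegralOn_rpowGaussian_le (b β x : ℝ) :
    ‖fourierIntegralOn (Ioi 0) (rpowGaussian b β) x‖ ≤ ∫ t in Ioi 0, rpowGaussian b β t :=
  norm_fourierIntegralOn_le measurableSet_Ioi (fun _ ht => rpowGaussian_nonneg (le_of_lt ht)) x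

lemma norm_fourierIntegralOn_rpowGaussian_le_of_nonpos (hb : 0 < b) (hβ : -1 < β) (hβ' : β ≤ 0)
    {x : ℝ} (hx : 0 < x) :
    ‖fourierIntegralOn (Ioi 0) (rpowGaussian b β) x‖
      ≤ π ^ (β + 1) / (β + 1) * x ^ (-(β + 1)) := by
  calc ‖fourierIntegralOn (Ioi 0) (rpowGaussian b β) x‖
      ≤ ∫ t in Ioc 0 (0 + π / x), rpowGaussian b β t :=
        norm_fourierIntegralOn_Ioi_le_of_antitoneOn (integrableOn_rpowGaussian hb hβ)
          (antitoneOn_rpowGaussian hb.le hβ') (fun _ ht => rpowGaussian_nonneg (le_of_lt ht)) hx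
    _ ≤ (π / x) ^ (β + 1) / (β + 1) := by
        rw [zero_add]
        exact setIntegral_Ioc_rpowGaussian_le hb hβ (div_pos pi_pos hx).le
    _ = π ^ (β + 1) / (β + 1) * x ^ (-(β + 1)) := by
        rw [div_rpow pi_pos.le hx.le, rpow_neg hx.le]
        ring

lemma isBigO_fourierIntegralOn_rpowGaussian_of_le_natCast (hb : 0 < b) (n : ℕ) {s : ℝ}
    (hβ : -1 < β) (hsn : s ≤ n) (hsβ : s ≤ β + 1) :
    fourierIntegralOn (Ioi 0) (rpowGaussian b β) =O[𝓟 (Ici 1)] fun x => x ^ (-s) := by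
  induction n generalizing β s with
  | zero =>
    refine IsBigO.trans (isBigO_principal.2 ⟨∫ t in Ioi 0, rpowGaussian b β t, fun x _ => ?_⟩)
      (isBigO_rpow_neg_of_le (r := 0) (by simpa using hsn))
    simpa using norm_fourierIntegralOn_rpowGaussian_le b β x
  | succ n ih =>
    rcases le_or_gt β 0 with hβ' | hβ'
    · refine IsBigO.trans (isBigO_principal.2 ⟨π ^ (β + 1) / (β + 1), fun x (hx : 1 ≤ x) => ?_⟩)
        (isBigO_rpow_neg_of_le hsβ)
      have hx0 : 0 < x := zero_lt_one.trans_le hx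
      rw [norm_of_nonneg (rpow_nonneg hx0.le _)]
      exact norm_fourierIntegralOn_rpowGaussian_le_of_nonpos hb hβ hβ' hx0
    · have hsn' : s - 1 ≤ n := by push_cast at hsn; linarith
      have hlower := ih (β := β - 1) (by linarith) hsn' (by linarith)
      have hupper := ih (β := β + 1) (by linarith) hsn' (by linarith)
      refine isBigO_rpow_neg_of_ofReal_mul ?_
      simp only [mul_fourierIntegralOn_rpowGaussian hb hβ']
      exact ((hlower.const_mul_left _).sub (hupper.const_mul_left _)).const_mul_left _

lemma isBigO_fourierIntegralOn_rpowGaussian (hb : 0 < b) (hβ : -1 < β) :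
    fourierIntegralOn (Ioi 0) (rpowGaussian b β) =O[𝓟 (Ici 1)] fun x => x ^ (-(β + 1)) :=
  have ⟨n, hn⟩ := exists_nat_ge (β + 1)
  isBigO_fourierIntegralOn_rpowGaussian_of_le_natCast hb n hβ hn le_rfl

lemma exists_norm_fourierIntegralOn_rpowGaussian_le (hb : 0 < b) (hβ : -1 < β) :
    ∃ C, 0 < C ∧ ∀ x, 0 ≤ x →
      ‖fourierIntegralOn (Ioi 0) (rpowGaussian b β) x‖ ≤ C * max 1 x ^ (-(β + 1)) := by
  obtain ⟨C, hC, hbound⟩ := (isBigO_fourierIntegralOn_rpowGaussian hb hβ).exists_pos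
  refine ⟨max C (∫ t in Ioi 0, rpowGaussian b β t), lt_max_of_lt_left hC, fun x hx => ?_⟩
  rcases le_total x 1 with hx1 | hx1
  · rw [max_eq_left hx1, one_rpow, mul_one]
    exact (norm_fourierIntegralOn_rpowGaussian_le b β x).trans (le_max_right _ _)
  · have hpow : 0 ≤ x ^ (-(β + 1)) := rpow_nonneg hx _
    have hdecay := eventually_principal.1 hbound.bound x hx1
    rw [norm_of_nonneg hpow] at hdecay
    rw [max_eq_right hx1]
    exact hdecay.trans (mul_le_mul_of_nonneg_right (le_max_left _ _) hpow)

end RpowGaussian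

/-- For `β > -1` and `J(x) = ∫_0^∞ e^{-η²} η^β cos(xη) dη`, there is a constant `C = C_β`
with `|J(x)| ≤ C · min(1, |x|^{-(β+1)})`; here `min(1,|x|^{-(β+1)}) = (max 1 |x|)^{-(β+1)}`. -/
theorem stmt1 (β : ℝ) (hβ : -1 < β) :
    ∃ C : ℝ, 0 < C ∧ ∀ x : ℝ,
      |∫ η in Set.Ioi (0 : ℝ), Real.exp (-η ^ 2) * η ^ β * Real.cos (x * η)|
        ≤ C * (max 1 |x|) ^ (-(β + 1)) := by
  obtain ⟨C, hC, hbound⟩ := exists_norm_fourierIntegralOn_rpowGaussian_le one_pos hβ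
  refine ⟨C, hC, fun x => ?_⟩
  have hweight (η : ℝ) : exp (-η ^ 2) * η ^ β = rpowGaussian 1 β η := by
    rw [rpowGaussian, neg_one_mul, mul_comm]
  simp only [hweight]
  exact (abs_integral_mul_cos_le_norm_fourierIntegralOn
    (integrableOn_rpowGaussian one_pos hβ) x).trans (hbound |x| (abs_nonneg x))
end

section
/- Let □_t(x,y,h) = G_t(x+y+h) - G_t(x+y) - G_t(x+h) + G_t(x), and α, β ∈ (0,1). Then ∫_ℝ ∫_ℝ ∫_ℝ |□_t(x,y,h)|^2 |h|^{-1-2α} |y|^{-1-2β} dy dh dx = C_{α,β} t^{-(1/2+α+β)} for some finite constant C_{α,β}, for every t > 0. -/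
open MeasureTheory Real Set

/-- The one-dimensional heat kernel. -/
noncomputable def heatKernel (t x : ℝ) : ℝ :=
  (Real.sqrt (4 * Real.pi * t))⁻¹ * Real.exp (-x ^ 2 / (4 * t))

/-! Parabolic scaling `G_t = t^{-1/2} G_1(t^{-1/2} ·)` reduces the identity to `0 < C < ∞` at
`t = 1`. For finiteness, integrate in `x` first: a difference of step `h` satisfies both
`‖Δ_h f‖₂ ≤ 2 ‖f‖₂` and `‖Δ_h f‖₂ ≤ |h| ‖f'‖₂`, and applying this in each of the two directions
bounds the inner integral by a multiple of `min(2, |h|)² min(2, |y|)²`, which is integrable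
against the two weights exactly because `0 < α, β < 1`. -/

open scoped ENNReal fwdDiff

theorem fwdDiff_fwdDiff_apply {M A : Type*} [AddCommMonoid M] [AddCommGroup A] (f : M → A)
    (y h x : M) :
    Δ_[y] (Δ_[h] f) x = f (x + y + h) - f (x + y) - f (x + h) + f x := by
  simp only [fwdDiff]
  abel

section LpIncrements

variable {E : Type*} [NormedAddCommGroup E] {p : ℝ≥0∞}

theorem eLpNorm_fwdDiff_le_two_mul {G : Type*} [AddCommGroup G] [MeasurableSpace G]
    [MeasurableAdd G] {μ : Measure G} [μ.IsAddRightInvariant] {f : G → E} (hp : 1 ≤ p)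
    (hf : AEStronglyMeasurable f μ) (h : G) :
    eLpNorm (Δ_[h] f) p μ ≤ 2 * eLpNorm f p μ := by
  have hτ := measurePreserving_add_right μ h
  calc eLpNorm (Δ_[h] f) p μ
      ≤ eLpNorm (f ∘ (· + h)) p μ + eLpNorm f p μ :=
        eLpNorm_sub_le (hf.comp_measurePreserving hτ) hf hp
    _ = 2 * eLpNorm f p μ := by rw [eLpNorm_comp_measurePreserving hf hτ, two_mul]

theorem rpow_lintegral_enorm_le_lintegral_rpow_enorm {Ω : Type*} [MeasurableSpace Ω]
    {μ : Measure Ω} [IsProbabilityMeasure μ] {f : Ω → E} {q : ℝ} (hq : 1 ≤ q)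
    (hf : AEStronglyMeasurable f μ) :
    (∫⁻ ω, ‖f ω‖ₑ ∂μ) ^ q ≤ ∫⁻ ω, ‖f ω‖ₑ ^ q ∂μ := by
  have hq₀ : 0 < q := one_pos.trans_le hq
  have hmono := eLpNorm'_le_eLpNorm'_of_exponent_le one_pos hq μ hf
  simp only [eLpNorm'_eq_lintegral_enorm, ENNReal.rpow_one, div_one] at hmono
  rwa [one_div, ENNReal.le_rpow_inv_iff hq₀] at hmono

theorem lintegral_lintegral_rpow_enorm_translate {g : ℝ → E} (hg : Continuous g) (q h : ℝ) :
    ∫⁻ x, ∫⁻ s in Ioc (0 : ℝ) 1, ‖g (x + s * h)‖ₑ ^ q = ∫⁻ x, ‖g x‖ₑ ^ q := by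
  have hmeas : Measurable (Function.uncurry fun x s : ℝ ↦ ‖g (x + s * h)‖ₑ ^ q) :=
    (Continuous.enorm (by fun_prop)).measurable.pow_const q
  rw [lintegral_lintegral_swap hmeas.aemeasurable]
  simp [lintegral_add_right_eq_self (fun x ↦ ‖g x‖ₑ ^ q)]

variable [NormedSpace ℝ E] {f f' f'' : ℝ → E}

theorem hasDerivAt_fwdDiff (hf : ∀ x, HasDerivAt f (f' x) x) (h x : ℝ) :
    HasDerivAt (Δ_[h] f) (Δ_[h] f' x) x :=
  ((hf (x + h)).comp_add_const x h).sub (hf x)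

variable [CompleteSpace E]

theorem enorm_fwdDiff_le_enorm_mul_lintegral (hf : ∀ x, HasDerivAt f (f' x) x)
    (hf' : Continuous f') (h x : ℝ) :
    ‖Δ_[h] f x‖ₑ ≤ ‖h‖ₑ * ∫⁻ s in Ioc (0 : ℝ) 1, ‖f' (x + s * h)‖ₑ := by
  have hftc : Δ_[h] f x = h • ∫ s in (0 : ℝ)..1, f' (x + s * h) :=
    (intervalIntegral.integral_unitInterval_deriv_eq_sub (𝕜 := ℝ)
      (hf'.comp (by fun_prop)).continuousOn fun s _ ↦ hf _).symm
  rw [hftc, enorm_smul, intervalIntegral.integral_of_le zero_le_one]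
  gcongr
  exact enorm_integral_le_lintegral_enorm _

theorem eLpNorm_fwdDiff_le_enorm_mul (hp : 1 ≤ p) (hp_top : p ≠ ∞)
    (hf : ∀ x, HasDerivAt f (f' x) x) (hf' : Continuous f') (h : ℝ) :
    eLpNorm (Δ_[h] f) p ≤ ‖h‖ₑ * eLpNorm f' p := by
  have hp₀ : p ≠ 0 := (one_pos.trans_le hp).ne'
  have hq : 1 ≤ p.toReal := by simpa using ENNReal.toReal_mono hp_top hp
  have hq₀ : 0 < p.toReal := one_pos.trans_le hq
  have : IsProbabilityMeasure (volume.restrict (Ioc (0 : ℝ) 1)) := ⟨by simp⟩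
  have hpoint (x : ℝ) : ‖Δ_[h] f x‖ₑ ^ p.toReal
      ≤ ‖h‖ₑ ^ p.toReal * ∫⁻ s in Ioc (0 : ℝ) 1, ‖f' (x + s * h)‖ₑ ^ p.toReal := by
    calc ‖Δ_[h] f x‖ₑ ^ p.toReal
        ≤ (‖h‖ₑ * ∫⁻ s in Ioc (0 : ℝ) 1, ‖f' (x + s * h)‖ₑ) ^ p.toReal := by
          gcongr; exact enorm_fwdDiff_le_enorm_mul_lintegral hf hf' h x
      _ = ‖h‖ₑ ^ p.toReal * (∫⁻ s in Ioc (0 : ℝ) 1, ‖f' (x + s * h)‖ₑ) ^ p.toReal :=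
          ENNReal.mul_rpow_of_nonneg _ _ hq₀.le
      _ ≤ _ := by
          gcongr
          exact rpow_lintegral_enorm_le_lintegral_rpow_enorm hq
            (hf'.comp (by fun_prop)).aestronglyMeasurable
  have hintegral : ∫⁻ x, ‖Δ_[h] f x‖ₑ ^ p.toReal
      ≤ ‖h‖ₑ ^ p.toReal * ∫⁻ x, ‖f' x‖ₑ ^ p.toReal := by
    rw [← lintegral_lintegral_rpow_enorm_translate hf' p.toReal h,
      ← lintegral_const_mul' _ _ (by finiteness)]
    exact lintegral_mono hpoint
  rw [eLpNorm_eq_lintegral_rpow_enorm_toReal hp₀ hp_top,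
    eLpNorm_eq_lintegral_rpow_enorm_toReal hp₀ hp_top, one_div,
    ENNReal.rpow_inv_le_iff hq₀, ENNReal.mul_rpow_of_nonneg _ _ hq₀.le,
    ENNReal.rpow_inv_rpow hq₀.ne']
  exact hintegral

theorem eLpNorm_fwdDiff_le_min (hp : 1 ≤ p) (hp_top : p ≠ ∞)
    (hf : ∀ x, HasDerivAt f (f' x) x) (hf' : Continuous f') {M : ℝ≥0∞}
    (hM : eLpNorm f p ≤ M) (hM' : eLpNorm f' p ≤ M) (h : ℝ) :
    eLpNorm (Δ_[h] f) p ≤ ENNReal.ofReal (min 2 |h|) * M := by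
  have hf_cont : Continuous f := continuous_iff_continuousAt.2 fun x ↦ (hf x).continuousAt
  rcases min_choice 2 |h| with hmin | hmin <;> rw [hmin]
  · rw [ENNReal.ofReal_ofNat]
    exact (eLpNorm_fwdDiff_le_two_mul hp hf_cont.aestronglyMeasurable h).trans (by gcongr)
  · rw [← Real.norm_eq_abs, ofReal_norm]
    exact (eLpNorm_fwdDiff_le_enorm_mul hp hp_top hf hf' h).trans (by gcongr)

theorem eLpNorm_fwdDiff_fwdDiff_le_min (hp : 1 ≤ p) (hp_top : p ≠ ∞)
    (hf : ∀ x, HasDerivAt f (f' x) x) (hf' : ∀ x, HasDerivAt f' (f'' x) x)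
    (hf'' : Continuous f'') {M : ℝ≥0∞}
    (hM : eLpNorm f p ≤ M) (hM' : eLpNorm f' p ≤ M) (hM'' : eLpNorm f'' p ≤ M) (y h : ℝ) :
    eLpNorm (Δ_[y] (Δ_[h] f)) p
      ≤ ENNReal.ofReal (min 2 |y|) * (ENNReal.ofReal (min 2 |h|) * M) := by
  have hf'_cont : Continuous f' := continuous_iff_continuousAt.2 fun x ↦ (hf' x).continuousAt
  have hΔf'_cont : Continuous (Δ_[h] f') := by unfold fwdDiff; fun_prop
  exact eLpNorm_fwdDiff_le_min hp hp_top (hasDerivAt_fwdDiff hf h) hΔf'_cont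
    (eLpNorm_fwdDiff_le_min hp hp_top hf hf'_cont hM hM' h)
    (eLpNorm_fwdDiff_le_min hp hp_top hf' hf'' hM' hM'' h) y

end LpIncrements

section SingularWeights

theorem integrable_comp_abs_of_integrableOn_Ioi {E : Type*} [NormedAddCommGroup E] {f : ℝ → E}
    (hf : IntegrableOn f (Ioi 0)) : Integrable fun x ↦ f |x| := by
  have hpos : IntegrableOn (fun x ↦ f |x|) (Ioi 0) :=
    hf.congr_fun (fun x hx ↦ by rw [abs_of_pos hx]) measurableSet_Ioi
  have hneg : IntegrableOn (fun x ↦ f |x|) (Iic 0) := by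
    have hpos' : IntegrableOn (fun x ↦ f |x|) (Ioi (-0)) := by rwa [neg_zero]
    rw [integrableOn_Iic_iff_integrableOn_Iio]
    simpa only [abs_neg] using hpos'.comp_neg_Iio
  rw [← integrableOn_univ, ← Iic_union_Ioi (a := (0 : ℝ))]
  exact hneg.union hpos

theorem integrable_min_abs_rpow_mul_abs_rpow {c p s : ℝ} (hc : 0 ≤ c) (hs : 0 < s)
    (hsp : s < p) : Integrable fun y : ℝ ↦ min c |y| ^ p * |y| ^ (-1 - s) := by
  have hp : 0 ≤ p := (hs.trans hsp).le
  have hmeas : Measurable fun y : ℝ ↦ min c y ^ p * y ^ (-1 - s) := by fun_prop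
  have near_zero : IntegrableOn (fun y : ℝ ↦ min c y ^ p * y ^ (-1 - s)) (Ioc 0 1) := by
    have hdom : IntegrableOn (fun y : ℝ ↦ y ^ (p + (-1 - s))) (Ioc 0 1) := by
      rw [integrableOn_Ioc_iff_integrableOn_Ioo,
        intervalIntegral.integrableOn_Ioo_rpow_iff one_pos]
      linarith
    refine Integrable.mono' hdom hmeas.aestronglyMeasurable ?_
    filter_upwards [ae_restrict_mem measurableSet_Ioc] with y ⟨hy, _⟩
    rw [Real.norm_of_nonneg (by positivity), Real.rpow_add hy]
    gcongr
    exact min_le_right c y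
  have near_infinity : IntegrableOn (fun y : ℝ ↦ min c y ^ p * y ^ (-1 - s)) (Ioi 1) := by
    have hdom : IntegrableOn (fun y : ℝ ↦ c ^ p * y ^ (-1 - s)) (Ioi 1) :=
      (integrableOn_Ioi_rpow_of_lt (by linarith) one_pos).const_mul _
    refine Integrable.mono' hdom hmeas.aestronglyMeasurable ?_
    filter_upwards [ae_restrict_mem measurableSet_Ioi] with y hy
    have hy₀ : 0 < y := one_pos.trans hy
    rw [Real.norm_of_nonneg (by positivity)]
    gcongr
    exact min_le_left c y
  have half_line := near_zero.union near_infinity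
  rw [Ioc_union_Ioi_eq_Ioi zero_le_one] at half_line
  exact integrable_comp_abs_of_integrableOn_Ioi half_line

theorem lintegral_abs_rpow_mul_min_sq_lt_top {a : ℝ} (ha : a ∈ Ioo (0 : ℝ) 1) :
    ∫⁻ y : ℝ, ENNReal.ofReal (|y| ^ (-1 - 2 * a)) * ENNReal.ofReal (min 2 |y|) ^ 2 < ∞ := by
  have hintegral : Integrable fun y : ℝ ↦ |y| ^ (-1 - 2 * a) * min 2 |y| ^ 2 := by
    simpa only [Real.rpow_two, mul_comm] using integrable_min_abs_rpow_mul_abs_rpow (c := 2)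
      (p := 2) (s := 2 * a) zero_le_two (by linarith [ha.1]) (by linarith [ha.2])
  refine lt_of_eq_of_lt (lintegral_congr fun y ↦ ?_) hintegral.lintegral_lt_top
  rw [ENNReal.ofReal_mul (by positivity), ENNReal.ofReal_pow (by positivity)]

end SingularWeights

section Dilation

theorem lintegral_comp_mul_left {b : ℝ} (hb : b ≠ 0) (g : ℝ → ℝ≥0∞) :
    ∫⁻ x, g (b * x) = ENNReal.ofReal |b|⁻¹ * ∫⁻ x, g x := by
  rw [← abs_inv, ← smul_eq_mul, ← lintegral_smul_measure, ← Real.map_volume_mul_left hb]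
  exact (lintegral_map_equiv g (Homeomorph.mulLeft₀ b hb).toMeasurableEquiv).symm

theorem lintegral_lintegral_lintegral_comp_mul_left {b : ℝ} (hb : b ≠ 0) (F : ℝ → ℝ → ℝ → ℝ≥0∞) :
    ∫⁻ x, ∫⁻ h, ∫⁻ y, F (b * x) (b * h) (b * y)
      = ENNReal.ofReal (|b|⁻¹ ^ 3) * ∫⁻ x, ∫⁻ h, ∫⁻ y, F x h y := by
  simp only [lintegral_comp_mul_left hb (F _ _), lintegral_const_mul' _ _ ENNReal.ofReal_ne_top]
  have hinner (x : ℝ) := lintegral_comp_mul_left hb fun h ↦ ∫⁻ y, F x h y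
  simp only [hinner, lintegral_const_mul' _ _ ENNReal.ofReal_ne_top]
  rw [lintegral_comp_mul_left hb fun x ↦ ∫⁻ h, ∫⁻ y, F x h y, ENNReal.ofReal_pow (by positivity)]
  ring

end Dilation

section MixedEnergy

/-- The squared second-order mixed increment of `f` at `x` in the directions `y` and `h`, weighted
as in a Gagliardo seminorm of dominating mixed smoothness: order `α` in `h`, order `β` in `y`. -/
noncomputable def mixedDensity (α β : ℝ) (f : ℝ → ℝ) (x h y : ℝ) : ℝ≥0∞ :=
  ENNReal.ofReal (|Δ_[y] (Δ_[h] f) x| ^ 2 * |h| ^ (-1 - 2 * α) * |y| ^ (-1 - 2 * β))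

/-- The squared Gagliardo seminorm of dominating mixed smoothness `(α, β)`, the left-hand side of
the scaling identity. It is a Lebesgue integral, so that divergence is recorded as the value
`∞`. -/
noncomputable def mixedEnergy (α β : ℝ) (f : ℝ → ℝ) : ℝ≥0∞ :=
  ∫⁻ x : ℝ, ∫⁻ h : ℝ, ∫⁻ y : ℝ, mixedDensity α β f x h y

variable {α β : ℝ} {f f' f'' : ℝ → ℝ}

theorem measurable_mixedDensity {Ω : Type*} [MeasurableSpace Ω] {x h y : Ω → ℝ}
    (hf : Measurable f) (hx : Measurable x) (hh : Measurable h) (hy : Measurable y) :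
    Measurable fun ω ↦ mixedDensity α β f (x ω) (h ω) (y ω) := by
  simp only [mixedDensity, fwdDiff_fwdDiff_apply]
  fun_prop

theorem mixedDensity_pos {x h y : ℝ} (hΔ : Δ_[y] (Δ_[h] f) x ≠ 0) :
    0 < mixedDensity α β f x h y := by
  have hh : h ≠ 0 := by rintro rfl; simp [fwdDiff] at hΔ
  have hy : y ≠ 0 := by rintro rfl; simp [fwdDiff] at hΔ
  exact ENNReal.ofReal_pos.2 (by positivity)

theorem lintegral_mixedDensity (h y : ℝ) :
    ∫⁻ x, mixedDensity α β f x h y = ENNReal.ofReal (|h| ^ (-1 - 2 * α)) *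
      (ENNReal.ofReal (|y| ^ (-1 - 2 * β)) * eLpNorm (Δ_[y] (Δ_[h] f)) 2 ^ 2) := by
  have hnorm : eLpNorm (Δ_[y] (Δ_[h] f)) 2 ^ 2
      = ∫⁻ x, ENNReal.ofReal (|Δ_[y] (Δ_[h] f) x| ^ 2) := by
    simpa only [ENNReal.ofReal_pow (abs_nonneg _), ← Real.enorm_eq_ofReal_abs, NNReal.coe_ofNat,
      ENNReal.coe_ofNat, ENNReal.rpow_ofNat] using
      eLpNorm_nnreal_pow_eq_lintegral (μ := volume) (f := Δ_[y] (Δ_[h] f)) (p := 2) two_ne_zero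
  rw [hnorm, ← mul_assoc, ← lintegral_const_mul' _ _ (by finiteness)]
  refine lintegral_congr fun x ↦ ?_
  rw [← ENNReal.ofReal_mul (by positivity), ← ENNReal.ofReal_mul (by positivity), mixedDensity]
  congr 1
  ring

theorem mixedDensity_const_smul (a x h y : ℝ) :
    mixedDensity α β (a • f) x h y = ENNReal.ofReal (a ^ 2) * mixedDensity α β f x h y := by
  rw [mixedDensity, mixedDensity, ← ENNReal.ofReal_mul (by positivity), fwdDiff_const_smul,
    fwdDiff_const_smul, Pi.smul_apply, smul_eq_mul, abs_mul, mul_pow, sq_abs a]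
  simp only [mul_assoc]

theorem mixedDensity_comp_mul_left {b : ℝ} (hb : b ≠ 0) (x h y : ℝ) :
    mixedDensity α β (fun x ↦ f (b * x)) x h y
      = ENNReal.ofReal (|b| ^ (2 + 2 * α + 2 * β))
        * mixedDensity α β f (b * x) (b * h) (b * y) := by
  have hb' : 0 < |b| := abs_pos.2 hb
  have hΔ : Δ_[y] (Δ_[h] fun x ↦ f (b * x)) x = Δ_[b * y] (Δ_[b * h] f) (b * x) := by
    simp only [fwdDiff, mul_add]
  have hexp : |b| ^ (2 + 2 * α + 2 * β) * (|b| ^ (-1 - 2 * α) * |b| ^ (-1 - 2 * β)) = 1 := by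
    rw [← Real.rpow_add hb', ← Real.rpow_add hb',
      show 2 + 2 * α + 2 * β + (-1 - 2 * α + (-1 - 2 * β)) = 0 by ring, Real.rpow_zero]
  rw [mixedDensity, mixedDensity, ← ENNReal.ofReal_mul (by positivity), hΔ, abs_mul b h,
    abs_mul b y, Real.mul_rpow (abs_nonneg b) (abs_nonneg h),
    Real.mul_rpow (abs_nonneg b) (abs_nonneg y)]
  congr 1
  linear_combination (-(|Δ_[b * y] (Δ_[b * h] f) (b * x)| ^ 2 * |h| ^ (-1 - 2 * α)
    * |y| ^ (-1 - 2 * β))) * hexp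

theorem mixedEnergy_eq_lintegral_prod (hf : Measurable f) :
    mixedEnergy α β f = ∫⁻ q : ℝ × ℝ × ℝ, mixedDensity α β f q.1 q.2.1 q.2.2 := by
  have hmeas : Measurable fun q : ℝ × ℝ × ℝ ↦ mixedDensity α β f q.1 q.2.1 q.2.2 :=
    measurable_mixedDensity hf (by fun_prop) (by fun_prop) (by fun_prop)
  have hmeas_x (x : ℝ) : Measurable fun r : ℝ × ℝ ↦ mixedDensity α β f x r.1 r.2 :=
    measurable_mixedDensity hf (by fun_prop) (by fun_prop) (by fun_prop)
  calc mixedEnergy α β f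
      = ∫⁻ x, ∫⁻ r : ℝ × ℝ, mixedDensity α β f x r.1 r.2 :=
        lintegral_congr fun x ↦ lintegral_lintegral (hmeas_x x).aemeasurable
    _ = ∫⁻ q : ℝ × ℝ × ℝ, mixedDensity α β f q.1 q.2.1 q.2.2 :=
        lintegral_lintegral hmeas.aemeasurable

theorem mixedEnergy_eq_lintegral_eLpNorm (hf : Measurable f) :
    mixedEnergy α β f = ∫⁻ h : ℝ, ∫⁻ y : ℝ, ENNReal.ofReal (|h| ^ (-1 - 2 * α)) *
      (ENNReal.ofReal (|y| ^ (-1 - 2 * β)) * eLpNorm (Δ_[y] (Δ_[h] f)) 2 ^ 2) := by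
  have hmeas : Measurable fun q : ℝ × ℝ × ℝ ↦ mixedDensity α β f q.1 q.2.1 q.2.2 :=
    measurable_mixedDensity hf (by fun_prop) (by fun_prop) (by fun_prop)
  rw [mixedEnergy_eq_lintegral_prod hf, Measure.volume_eq_prod,
    lintegral_prod_symm _ hmeas.aemeasurable, Measure.volume_eq_prod,
    lintegral_prod _ hmeas.lintegral_prod_left'.aemeasurable]
  simp only [lintegral_mixedDensity]

theorem mixedEnergy_lt_top (hα : α ∈ Ioo (0 : ℝ) 1) (hβ : β ∈ Ioo (0 : ℝ) 1)
    (hf : ∀ x, HasDerivAt f (f' x) x) (hf' : ∀ x, HasDerivAt f' (f'' x) x)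
    (hf'' : Continuous f'') (hL : MemLp f 2) (hL' : MemLp f' 2) (hL'' : MemLp f'' 2) :
    mixedEnergy α β f < ∞ := by
  set w : ℝ → ℝ → ℝ≥0∞ := fun a y ↦
    ENNReal.ofReal (|y| ^ (-1 - 2 * a)) * ENNReal.ofReal (min 2 |y|) ^ 2
  set M := max (eLpNorm f 2) (max (eLpNorm f' 2) (eLpNorm f'' 2)) with hM_def
  have hM : M ≠ ∞ := (max_lt hL.2 (max_lt hL'.2 hL''.2)).ne
  have hbound (y h : ℝ) : eLpNorm (Δ_[y] (Δ_[h] f)) 2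
      ≤ ENNReal.ofReal (min 2 |y|) * (ENNReal.ofReal (min 2 |h|) * M) :=
    eLpNorm_fwdDiff_fwdDiff_le_min one_le_two (by finiteness) hf hf' hf''
      (by simp [hM_def]) (by simp [hM_def]) (by simp [hM_def]) y h
  have hf_meas : Measurable f :=
    (continuous_iff_continuousAt.2 fun x ↦ (hf x).continuousAt).measurable
  calc mixedEnergy α β f
      ≤ ∫⁻ h, ∫⁻ y, M ^ 2 * w α h * w β y := by
        rw [mixedEnergy_eq_lintegral_eLpNorm hf_meas]
        refine lintegral_mono fun h ↦ lintegral_mono fun y ↦ ?_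
        calc _ ≤ ENNReal.ofReal (|h| ^ (-1 - 2 * α)) * (ENNReal.ofReal (|y| ^ (-1 - 2 * β)) *
              (ENNReal.ofReal (min 2 |y|) * (ENNReal.ofReal (min 2 |h|) * M)) ^ 2) := by
              gcongr; exact hbound y h
          _ = M ^ 2 * w α h * w β y := by simp only [w]; ring
    _ = M ^ 2 * (∫⁻ h, w α h) * ∫⁻ y, w β y := by
        have hw : Measurable (w α) := by fun_prop
        have hw' : Measurable (w β) := by fun_prop
        simp_rw [lintegral_const_mul _ hw']
        rw [lintegral_mul_const _ (hw.const_mul _), lintegral_const_mul _ hw]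
    _ < ∞ := ENNReal.mul_lt_top
        (ENNReal.mul_lt_top (by finiteness) (lintegral_abs_rpow_mul_min_sq_lt_top hα))
        (lintegral_abs_rpow_mul_min_sq_lt_top hβ)

theorem mixedEnergy_pos (hf : Continuous f) {x y h : ℝ} (hxyh : Δ_[y] (Δ_[h] f) x ≠ 0) :
    0 < mixedEnergy α β f := by
  let U : Set (ℝ × ℝ × ℝ) := {q | Δ_[q.2.2] (Δ_[q.2.1] f) q.1 ≠ 0}
  have hU_open : IsOpen U := by
    simp only [U, fwdDiff_fwdDiff_apply]
    exact isOpen_ne_fun (by fun_prop) continuous_const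
  rw [mixedEnergy_eq_lintegral_prod hf.measurable,
    lintegral_pos_iff_support (measurable_mixedDensity hf.measurable (by fun_prop) (by fun_prop)
      (by fun_prop))]
  exact (hU_open.measure_pos volume ⟨(x, h, y), hxyh⟩).trans_le
    (measure_mono fun _ hΔ ↦ (mixedDensity_pos hΔ).ne')

theorem mixedEnergy_const_smul (a : ℝ) :
    mixedEnergy α β (a • f) = ENNReal.ofReal (a ^ 2) * mixedEnergy α β f := by
  simp only [mixedEnergy, mixedDensity_const_smul,
    lintegral_const_mul' _ _ ENNReal.ofReal_ne_top]

theorem mixedEnergy_comp_mul_left {b : ℝ} (hb : b ≠ 0) :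
    mixedEnergy α β (fun x ↦ f (b * x))
      = ENNReal.ofReal (|b| ^ (2 * α + 2 * β - 1)) * mixedEnergy α β f := by
  have hscale : |b| ^ (2 + 2 * α + 2 * β) * |b|⁻¹ ^ 3 = |b| ^ (2 * α + 2 * β - 1) := by
    rw [inv_pow, ← div_eq_mul_inv, ← Real.rpow_sub_natCast (abs_ne_zero.2 hb)]
    congr 1
    push_cast
    ring
  simp only [mixedEnergy, mixedDensity_comp_mul_left hb,
    lintegral_const_mul' _ _ ENNReal.ofReal_ne_top]
  rw [lintegral_lintegral_lintegral_comp_mul_left hb (mixedDensity α β f), ← mul_assoc,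
    ← ENNReal.ofReal_mul (by positivity), hscale]

end MixedEnergy

section HeatKernel

variable {α β t : ℝ}

theorem continuous_heatKernel (t : ℝ) : Continuous (heatKernel t) := by
  unfold heatKernel
  fun_prop

theorem heatKernel_neg (t x : ℝ) : heatKernel t (-x) = heatKernel t x := by
  simp only [heatKernel, neg_sq]

theorem heatKernel_lt_heatKernel_zero (ht : 0 < t) {x : ℝ} (hx : x ≠ 0) :
    heatKernel t x < heatKernel t 0 := by
  have hexp : -x ^ 2 / (4 * t) < -0 ^ 2 / (4 * t) := by
    rw [zero_pow two_ne_zero, neg_zero, zero_div]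
    exact div_neg_of_neg_of_pos (neg_neg_of_pos (by positivity)) (by positivity)
  unfold heatKernel
  gcongr

theorem heatKernel_eq_smul_heatKernel_one (ht : 0 < t) :
    heatKernel t = (√t)⁻¹ • fun x ↦ heatKernel 1 ((√t)⁻¹ * x) := by
  ext x
  have hexp : -x ^ 2 / (4 * t) = -((√t)⁻¹ * x) ^ 2 / (4 * 1) := by
    rw [mul_pow, inv_pow, Real.sq_sqrt ht.le]
    field_simp
  have hnormalization : (√(4 * π * t))⁻¹ = (√t)⁻¹ * (√(4 * π * 1))⁻¹ := by
    rw [mul_one, Real.sqrt_mul (by positivity), mul_inv, mul_comm]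
  rw [Pi.smul_apply, smul_eq_mul, heatKernel, heatKernel, hexp, hnormalization, mul_assoc]

theorem hasDerivAt_heatKernel (t x : ℝ) :
    HasDerivAt (heatKernel t) (-(x / (2 * t)) * heatKernel t x) x := by
  have hexponent : HasDerivAt (fun x ↦ -x ^ 2 / (4 * t)) (-(x / (2 * t))) x := by
    convert! (hasDerivAt_pow 2 x).neg.div_const (4 * t) using 1
    norm_num
    ring
  convert! hexponent.exp.const_mul (√(4 * π * t))⁻¹ using 1
  rw [heatKernel]
  ring

theorem hasDerivAt_deriv_heatKernel (t x : ℝ) :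
    HasDerivAt (fun x ↦ -(x / (2 * t)) * heatKernel t x)
      (((x / (2 * t)) ^ 2 - (2 * t)⁻¹) * heatKernel t x) x := by
  have hfactor : HasDerivAt (fun x ↦ -(x / (2 * t))) (-(1 / (2 * t))) x :=
    ((hasDerivAt_id x).div_const (2 * t)).neg
  convert! hfactor.mul (hasDerivAt_heatKernel t x) using 1
  ring

theorem memLp_two_pow_mul_heatKernel (ht : 0 < t) (n : ℕ) :
    MemLp (fun x ↦ x ^ n * heatKernel t x) 2 := by
  have hcont := continuous_heatKernel t
  have hgauss : Integrable fun x : ℝ ↦ x ^ (2 * n) * exp (-(2 * t)⁻¹ * x ^ 2) := by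
    simpa only [Real.rpow_natCast] using integrable_rpow_mul_exp_neg_mul_sq
      (b := (2 * t)⁻¹) (by positivity) (s := (2 * n : ℕ)) (neg_one_lt_zero.trans_le (by positivity))
  rw [memLp_two_iff_integrable_sq (by fun_prop)]
  refine (hgauss.const_mul ((√(4 * π * t))⁻¹ ^ 2)).congr (.of_forall fun x ↦ ?_)
  have hexp : exp (-(2 * t)⁻¹ * x ^ 2) = exp (-x ^ 2 / (4 * t)) ^ 2 := by
    rw [← Real.exp_nat_mul]
    congr 1
    push_cast
    ring
  simp only [heatKernel, hexp]
  ring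

theorem mixedEnergy_heatKernel_lt_top (ht : 0 < t) (hα : α ∈ Ioo (0 : ℝ) 1)
    (hβ : β ∈ Ioo (0 : ℝ) 1) : mixedEnergy α β (heatKernel t) < ∞ := by
  have hcont := continuous_heatKernel t
  have hL : MemLp (heatKernel t) 2 := by
    simpa only [pow_zero, one_mul] using memLp_two_pow_mul_heatKernel ht 0
  have hL' : MemLp (fun x ↦ -(x / (2 * t)) * heatKernel t x) 2 := by
    convert! (memLp_two_pow_mul_heatKernel ht 1).const_mul (-(2 * t)⁻¹) using 2
    ring
  have hL'' : MemLp (fun x ↦ ((x / (2 * t)) ^ 2 - (2 * t)⁻¹) * heatKernel t x) 2 := by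
    convert! ((memLp_two_pow_mul_heatKernel ht 2).const_mul ((2 * t)⁻¹ ^ 2)).sub
      (hL.const_mul (2 * t)⁻¹) using 2
    simp only [Pi.sub_apply]
    ring
  exact mixedEnergy_lt_top hα hβ (hasDerivAt_heatKernel t) (hasDerivAt_deriv_heatKernel t)
    (by fun_prop) hL hL' hL''

theorem mixedEnergy_heatKernel_pos (ht : 0 < t) : 0 < mixedEnergy α β (heatKernel t) := by
  have hincrement : Δ_[1] (Δ_[1] (heatKernel t)) (-1) = 2 * (heatKernel t 1 - heatKernel t 0) := by
    rw [fwdDiff_fwdDiff_apply, heatKernel_neg]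
    norm_num
    ring
  refine mixedEnergy_pos (continuous_heatKernel t) (x := -1) (y := 1) (h := 1) ?_
  rw [hincrement]
  linarith [heatKernel_lt_heatKernel_zero ht one_ne_zero]

theorem mixedEnergy_heatKernel (ht : 0 < t) :
    mixedEnergy α β (heatKernel t)
      = ENNReal.ofReal (t ^ (-(1 / 2 + α + β))) * mixedEnergy α β (heatKernel 1) := by
  have hpow : (√t)⁻¹ ^ 2 * |(√t)⁻¹| ^ (2 * α + 2 * β - 1) = t ^ (-(1 / 2 + α + β)) := by
    rw [abs_of_pos (by positivity), ← Real.rpow_two, ← Real.rpow_add (by positivity),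
      Real.sqrt_eq_rpow, ← Real.rpow_neg ht.le, ← Real.rpow_mul ht.le]
    congr 1
    ring
  rw [heatKernel_eq_smul_heatKernel_one ht, mixedEnergy_const_smul,
    mixedEnergy_comp_mul_left (by positivity), ← mul_assoc,
    ← ENNReal.ofReal_mul (by positivity), hpow]

end HeatKernel

/-- For `α, β ∈ (0,1)` and `□_t(x,y,h) = G_t(x+y+h) - G_t(x+y) - G_t(x+h) + G_t(x)`,
there is a finite constant `C_{α,β}` with
`∫∫∫ |□_t(x,y,h)|² |h|^{-1-2α} |y|^{-1-2β} dy dh dx = C_{α,β} t^{-(1/2+α+β)}` for all `t > 0`. -/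
theorem stmt5 (α β : ℝ) (hα : α ∈ Set.Ioo (0 : ℝ) 1) (hβ : β ∈ Set.Ioo (0 : ℝ) 1) :
    ∃ C : ℝ, 0 < C ∧ ∀ t : ℝ, 0 < t →
      (∫⁻ x : ℝ, ∫⁻ h : ℝ, ∫⁻ y : ℝ, ENNReal.ofReal
          (|heatKernel t (x + y + h) - heatKernel t (x + y)
              - heatKernel t (x + h) + heatKernel t x| ^ 2
            * |h| ^ (-1 - 2 * α) * |y| ^ (-1 - 2 * β)))
        = ENNReal.ofReal (C * t ^ (-(1 / 2 + α + β))) := by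
  have hfin : mixedEnergy α β (heatKernel 1) ≠ ∞ :=
    (mixedEnergy_heatKernel_lt_top one_pos hα hβ).ne
  have hpos : 0 < mixedEnergy α β (heatKernel 1) := mixedEnergy_heatKernel_pos one_pos
  refine ⟨(mixedEnergy α β (heatKernel 1)).toReal, ENNReal.toReal_pos hpos.ne' hfin,
    fun t ht ↦ ?_⟩
  rw [ENNReal.ofReal_mul ENNReal.toReal_nonneg, ENNReal.ofReal_toReal hfin,
    mul_comm (mixedEnergy _ _ _), ← mixedEnergy_heatKernel ht]
  simp only [mixedEnergy, mixedDensity, fwdDiff_fwdDiff_apply]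
end

section
/- Fix 1/4 < H < 1/2 and define □(x,y,h) = e^{-(x+y+h)^2} - e^{-(x+h)^2} - e^{-(x+y)^2} + e^{-x^2} and F(x) = ∫_ℝ ∫_ℝ |□(x,y,h)|^2 |h|^{2H-2} |y|^{2H-2} dy dh. Then there exists a constant C depending only on H such that F(x) ≤ C · min(1, |x|^{2H-2}) for all x ∈ ℝ. -/
open MeasureTheory Real Set

/-! Let `f` be a `C²` function whose derivatives of order at most two are, in square, at most a
weight `w` that varies by a bounded factor on unit balls. The mean value inequality for small `h`
and the triangle inequality for large `h` give
`‖Δ_[h] f x‖ ^ 2 ≤ L * min 1 ‖h‖ ^ 2 * (w x + w (x + h))`. For fixed `y` the function `Δ_[y] f`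
satisfies the same hypotheses with a weight of the same kind, so the mixed increment is controlled
by applying this estimate twice. For `w x = (1 + ‖x‖) ^ a` the integral operator
with kernel `min 1 ‖h‖ ^ 2 * ‖h‖ ^ a` maps `w` into a multiple of `w`, because one of `x + h` and
`h` is at least of the size of `x`; applying it twice gives the theorem. -/

open Module fwdDiff
open scoped ENNReal

section SlowlyVarying

variable {E F : Type*} [NormedAddCommGroup E] [NormedAddCommGroup F]

/-- A weight `M` is slowly varying with constant `L` if its values at points at distance at most
`1` differ at most by the factor `L`; this lets a bound on a derivative at `x` serve on the whole
unit ball around `x`. -/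
def SlowlyVarying (L : ℝ) (M : E → ℝ) : Prop :=
  ∀ ⦃u v : E⦄, ‖u - v‖ ≤ 1 → M u ≤ L * M v

lemma SlowlyVarying.const_mul {L : ℝ} {M : E → ℝ} (hM : SlowlyVarying L M) {c : ℝ} (hc : 0 ≤ c) :
    SlowlyVarying L (fun u ↦ c * M u) := fun u v huv ↦
  calc c * M u ≤ c * (L * M v) := by gcongr; exact hM huv
    _ = L * (c * M v) := by ring

lemma SlowlyVarying.add_translate {L : ℝ} {M : E → ℝ} (hM : SlowlyVarying L M) (y : E) :
    SlowlyVarying L (fun u ↦ M u + M (u + y)) := fun u v huv ↦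
  calc M u + M (u + y) ≤ L * M v + L * M (v + y) :=
        add_le_add (hM huv) (hM (by rwa [add_sub_add_right_eq_sub]))
    _ = L * (M v + M (v + y)) := by ring

variable [NormedSpace ℝ E] [NormedSpace ℝ F]

lemma differentiable_fwdDiff {f : E → F} (hf : Differentiable ℝ f) (y : E) :
    Differentiable ℝ (Δ_[y] f) := by
  unfold fwdDiff; fun_prop

lemma fderiv_fwdDiff {f : E → F} (hf : Differentiable ℝ f) (y : E) :
    fderiv ℝ (Δ_[y] f) = Δ_[y] (fderiv ℝ f) := by
  ext1 x
  calc fderiv ℝ (fun u ↦ f (u + y) - f u) x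
      = fderiv ℝ (fun u ↦ f (u + y)) x - fderiv ℝ f x :=
        fderiv_fun_sub (by fun_prop) (hf x)
    _ = fderiv ℝ f (x + y) - fderiv ℝ f x := by rw [fderiv_comp_add_right]

variable {f : E → F} {L : ℝ} {M : E → ℝ}

lemma sq_norm_fwdDiff_le (hL : 2 ≤ L) (hM : SlowlyVarying L M) (hf : Differentiable ℝ f)
    (h₀ : ∀ u, ‖f u‖ ^ 2 ≤ M u) (h₁ : ∀ u, ‖fderiv ℝ f u‖ ^ 2 ≤ M u) (h x : E) :
    ‖Δ_[h] f x‖ ^ 2 ≤ L * min 1 ‖h‖ ^ 2 * (M x + M (x + h)) := by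
  have M_nonneg (u : E) : 0 ≤ M u := (sq_nonneg _).trans (h₀ u)
  rcases le_total ‖h‖ 1 with hh | hh
  · have fderiv_le : ∀ u ∈ Metric.closedBall x 1, ‖fderiv ℝ f u‖ ≤ √(L * M x) := fun u hu ↦
      le_sqrt_of_sq_le ((h₁ u).trans (hM (mem_closedBall_iff_norm.mp hu)))
    have mean_value : ‖Δ_[h] f x‖ ≤ √(L * M x) * ‖h‖ := by
      simpa [fwdDiff] using (convex_closedBall x 1).norm_image_sub_le_of_norm_fderiv_le
        (fun u _ ↦ hf u) fderiv_le (Metric.mem_closedBall_self zero_le_one)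
        (y := x + h) (by simpa using hh)
    have := M_nonneg x
    calc ‖Δ_[h] f x‖ ^ 2 ≤ (√(L * M x) * ‖h‖) ^ 2 := by gcongr
      _ = L * ‖h‖ ^ 2 * M x := by rw [mul_pow, sq_sqrt (by positivity)]; ring
      _ ≤ L * min 1 ‖h‖ ^ 2 * (M x + M (x + h)) := by
        rw [min_eq_right hh]
        gcongr
        exact le_add_of_nonneg_right (M_nonneg _)
  · calc ‖Δ_[h] f x‖ ^ 2 ≤ (‖f (x + h)‖ + ‖f x‖) ^ 2 := by gcongr; exact norm_sub_le _ _
      _ ≤ 2 * (‖f (x + h)‖ ^ 2 + ‖f x‖ ^ 2) := add_sq_le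
      _ ≤ L * (M x + M (x + h)) := by
        rw [add_comm (M x)]
        gcongr
        exacts [h₀ _, h₀ _]
      _ = L * min 1 ‖h‖ ^ 2 * (M x + M (x + h)) := by rw [min_eq_left hh]; ring

lemma sq_norm_fwdDiff_fwdDiff_le (hL : 2 ≤ L) (hM : SlowlyVarying L M) (hf : ContDiff ℝ 2 f)
    (hfM : ∀ k ≤ 2, ∀ u, ‖iteratedFDeriv ℝ k f u‖ ^ 2 ≤ M u) (h y x : E) :
    ‖Δ_[h] (Δ_[y] f) x‖ ^ 2 ≤ L ^ 2 * (min 1 ‖h‖ ^ 2 * min 1 ‖y‖ ^ 2 *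
      (M x + M (x + y) + (M (x + h) + M (x + h + y)))) := by
  have h₀ (u : E) : ‖f u‖ ^ 2 ≤ M u := by simpa using hfM 0 (by norm_num) u
  have h₁ (u : E) : ‖fderiv ℝ f u‖ ^ 2 ≤ M u := by
    simpa [norm_iteratedFDeriv_one] using hfM 1 (by norm_num) u
  have h₂ (u : E) : ‖fderiv ℝ (fderiv ℝ f) u‖ ^ 2 ≤ M u := by
    simpa [← norm_iteratedFDeriv_fderiv, norm_iteratedFDeriv_one] using hfM 2 le_rfl u
  have df : Differentiable ℝ f := hf.differentiable two_ne_zero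
  have df' : Differentiable ℝ (fderiv ℝ f) :=
    (hf.fderiv_right (m := 1) (by norm_num)).differentiable one_ne_zero
  have increment_weight : SlowlyVarying L
      (fun u ↦ L * min 1 ‖y‖ ^ 2 * (M u + M (u + y))) :=
    (hM.add_translate y).const_mul (by positivity)
  calc ‖Δ_[h] (Δ_[y] f) x‖ ^ 2
      ≤ L * min 1 ‖h‖ ^ 2 * (L * min 1 ‖y‖ ^ 2 * (M x + M (x + y)) +
          L * min 1 ‖y‖ ^ 2 * (M (x + h) + M (x + h + y))) := by
        refine sq_norm_fwdDiff_le hL increment_weight (differentiable_fwdDiff df y)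
          (sq_norm_fwdDiff_le hL hM df h₀ h₁ y) ?_ h x
        rw [fderiv_fwdDiff df]
        exact sq_norm_fwdDiff_le hL hM df' h₁ h₂ y
    _ = _ := by ring

end SlowlyVarying

section Weights

variable {E : Type*} [NormedAddCommGroup E] {a : ℝ}

/-- The power `(1 + ‖x‖) ^ a` of the inhomogeneous distance to the origin: the decay rate of the
theorem, comparable to `max 1 ‖x‖ ^ a`. -/
noncomputable def bracketPow (a : ℝ) (x : E) : ℝ := (1 + ‖x‖) ^ a

/-- The kernel `‖h‖ ^ a` damped by the factor `min 1 ‖h‖ ^ 2` that a squared increment in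
direction `h` contributes. -/
noncomputable def dampedPow (a : ℝ) (h : E) : ℝ := min 1 ‖h‖ ^ 2 * ‖h‖ ^ a

lemma bracketPow_nonneg (a : ℝ) (x : E) : 0 ≤ bracketPow a x := by
  unfold bracketPow; positivity

lemma dampedPow_nonneg (a : ℝ) (h : E) : 0 ≤ dampedPow a h := by
  unfold dampedPow; positivity

lemma rpow_le_two_rpow_neg_mul_rpow {s t : ℝ} (hs : 0 < s) (hst : s ≤ 2 * t) (ha : a ≤ 0) :
    t ^ a ≤ 2 ^ (-a) * s ^ a :=
  calc t ^ a ≤ (s / 2) ^ a := rpow_le_rpow_of_nonpos (by positivity) (by linarith) ha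
    _ = 2 ^ (-a) * s ^ a := by
      rw [div_rpow hs.le zero_le_two, rpow_neg zero_le_two, div_eq_inv_mul]

lemma slowlyVarying_bracketPow (ha : a ≤ 0) :
    SlowlyVarying (2 ^ (-a)) (bracketPow a : E → ℝ) := fun u v huv ↦
  rpow_le_two_rpow_neg_mul_rpow (by positivity)
    (by linarith [norm_le_norm_add_norm_sub u v, norm_nonneg u]) ha

lemma dampedPow_mul_bracketPow_le (ha : a ≤ 0) (x h : E) :
    dampedPow a h * bracketPow a (x + h) ≤
      2 ^ (-a) * bracketPow a x * (dampedPow a h + bracketPow a (x + h)) := by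
  have hk := dampedPow_nonneg a h
  have hw := bracketPow_nonneg a (x + h)
  have hx := bracketPow_nonneg a x
  rcases le_or_gt (1 + ‖x‖) (2 * (1 + ‖x + h‖)) with hxh | hxh
  · calc dampedPow a h * bracketPow a (x + h)
        ≤ dampedPow a h * (2 ^ (-a) * bracketPow a x) := by
          gcongr
          exact rpow_le_two_rpow_neg_mul_rpow (by positivity) hxh ha
      _ = 2 ^ (-a) * bracketPow a x * dampedPow a h := by ring
      _ ≤ _ := by gcongr; exact le_add_of_nonneg_right hw
  · have triangle : ‖x‖ ≤ ‖x + h‖ + ‖h‖ := by simpa using norm_sub_le (x + h) h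
    have one_le_norm : 1 ≤ ‖h‖ := by linarith [norm_nonneg (x + h)]
    have dampedPow_le : dampedPow a h ≤ 2 ^ (-a) * bracketPow a x := by
      rw [dampedPow, min_eq_left one_le_norm, one_pow, one_mul]
      exact rpow_le_two_rpow_neg_mul_rpow (by positivity) (by linarith) ha
    calc dampedPow a h * bracketPow a (x + h)
        ≤ 2 ^ (-a) * bracketPow a x * bracketPow a (x + h) := by gcongr
      _ ≤ _ := by gcongr; exact le_add_of_nonneg_left hk

lemma bracketPow_le_max_rpow (ha : a ≤ 0) (x : E) : bracketPow a x ≤ max 1 ‖x‖ ^ a :=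
  rpow_le_rpow_of_nonpos (by positivity)
    (max_le (le_add_of_nonneg_right (norm_nonneg x)) (le_add_of_nonneg_left zero_le_one)) ha

variable [MeasurableSpace E] [BorelSpace E]

@[fun_prop]
lemma measurable_bracketPow (a : ℝ) : Measurable (bracketPow a : E → ℝ) := by
  unfold bracketPow; fun_prop

@[fun_prop]
lemma measurable_dampedPow (a : ℝ) : Measurable (dampedPow a : E → ℝ) := by
  unfold dampedPow; fun_prop

end Weights

section MixedIncrement

variable {E F : Type*} [NormedAddCommGroup E] [NormedSpace ℝ E] [NormedAddCommGroup F]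
  [NormedSpace ℝ F] {f : E → F} {a K : ℝ}

lemma sq_norm_fwdDiff_fwdDiff_mul_rpow_le (ha : a ≤ -1) (hf : ContDiff ℝ 2 f) (hK₀ : 0 ≤ K)
    (hK : ∀ k ≤ 2, ∀ u, ‖iteratedFDeriv ℝ k f u‖ ^ 2 ≤ K * bracketPow a u) (h y x : E) :
    ‖Δ_[h] (Δ_[y] f) x‖ ^ 2 * ‖h‖ ^ a * ‖y‖ ^ a ≤ (2 ^ (-a)) ^ 2 * K *
      (dampedPow a h * dampedPow a y * (bracketPow a x + bracketPow a (x + y) +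
        (bracketPow a (x + h) + bracketPow a (x + h + y)))) := by
  have two_le : (2 : ℝ) ≤ 2 ^ (-a) := by
    simpa using rpow_le_rpow_of_exponent_le one_le_two (le_neg.mpr ha)
  have weight := (slowlyVarying_bracketPow (E := E) (ha.trans (by norm_num))).const_mul hK₀
  calc ‖Δ_[h] (Δ_[y] f) x‖ ^ 2 * ‖h‖ ^ a * ‖y‖ ^ a
      ≤ (2 ^ (-a)) ^ 2 * (min 1 ‖h‖ ^ 2 * min 1 ‖y‖ ^ 2 *
          (K * bracketPow a x + K * bracketPow a (x + y) +
            (K * bracketPow a (x + h) + K * bracketPow a (x + h + y)))) * ‖h‖ ^ a * ‖y‖ ^ a := by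
        gcongr
        exact sq_norm_fwdDiff_fwdDiff_le two_le weight hf hK h y x
    _ = _ := by unfold dampedPow; ring

lemma ofReal_sq_norm_fwdDiff_fwdDiff_mul_rpow_le (ha : a ≤ -1) (hf : ContDiff ℝ 2 f)
    (hK : ∀ k ≤ 2, ∀ u, ‖iteratedFDeriv ℝ k f u‖ ^ 2 ≤ K * bracketPow a u) (h y x : E) :
    ENNReal.ofReal (‖Δ_[h] (Δ_[y] f) x‖ ^ 2 * ‖h‖ ^ a * ‖y‖ ^ a) ≤ .ofReal ((2 ^ (-a)) ^ 2 * K) *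
      (.ofReal (dampedPow a h) * .ofReal (dampedPow a y) *
        (.ofReal (bracketPow a x) + .ofReal (bracketPow a (x + y)) +
          (.ofReal (bracketPow a (x + h)) + .ofReal (bracketPow a (x + h + y))))) := by
  have hK₀ : 0 ≤ K := by
    simpa [bracketPow] using (sq_nonneg _).trans (hK 0 (by norm_num) 0)
  have c_nonneg : 0 ≤ (2 ^ (-a)) ^ 2 * K := by positivity
  have k_nonneg := dampedPow_nonneg (E := E) a
  have w_nonneg := bracketPow_nonneg (E := E) a
  refine (ENNReal.ofReal_le_ofReal <|
    sq_norm_fwdDiff_fwdDiff_mul_rpow_le ha hf hK₀ hK h y x).trans_eq ?_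
  rw [ENNReal.ofReal_mul c_nonneg]
  simp only [ENNReal.ofReal_mul, ENNReal.ofReal_add, k_nonneg, w_nonneg, add_nonneg, mul_nonneg]

end MixedIncrement

section Integration

lemma integrableOn_Ioi_pow_mul_min_sq_mul_rpow {n : ℕ} {a : ℝ} (ha : -(n + 3 : ℝ) < a)
    (ha' : a < -(n + 1 : ℝ)) :
    IntegrableOn (fun r : ℝ ↦ r ^ n * (min 1 r ^ 2 * r ^ a)) (Ioi 0) := by
  rw [← Ioc_union_Ioi_eq_Ioi zero_le_one, integrableOn_union]
  constructor
  · have near_zero : IntegrableOn (fun r : ℝ ↦ r ^ (n + 2 + a)) (Ioc 0 1) :=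
      (intervalIntegral.intervalIntegrable_rpow' (by linarith)).1
    refine near_zero.congr_fun (fun r hr ↦ ?_) measurableSet_Ioc
    have := hr.1
    simp only [min_eq_right hr.2, rpow_add this, rpow_natCast, rpow_two, mul_assoc]
  · have near_infinity : IntegrableOn (fun r : ℝ ↦ r ^ (n + a)) (Ioi 1) :=
      integrableOn_Ioi_rpow_of_lt (by linarith) one_pos
    refine near_infinity.congr_fun (fun r hr ↦ ?_) measurableSet_Ioi
    have : 0 < r := one_pos.trans hr
    simp only [min_eq_left (mem_Ioi.mp hr).le, rpow_add this, rpow_natCast, one_pow, one_mul]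

lemma lintegral_lintegral_kernel_mul_le {G : Type*} [AddSemigroup G] [MeasurableSpace G]
    [MeasurableAdd₂ G] {μ : Measure G} {k w : G → ℝ≥0∞} (hk : Measurable k) (hw : Measurable w)
    {A : ℝ≥0∞} (hA : ∀ x, ∫⁻ h, k h * (w x + w (x + h)) ∂μ ≤ A * w x) (x : G) :
    ∫⁻ h, ∫⁻ y, k h * k y * (w x + w (x + y) + (w (x + h) + w (x + h + y))) ∂μ ∂μ ≤
      A ^ 2 * w x := by
  have inner_le (h : G) :
      ∫⁻ y, k h * k y * (w x + w (x + y) + (w (x + h) + w (x + h + y))) ∂μ ≤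
        A * (k h * (w x + w (x + h))) :=
    calc _ = ∫⁻ y, k h * (k y * (w x + w (x + y)) + k y * (w (x + h) + w (x + h + y))) ∂μ := by
          simp only [mul_add, mul_assoc]
      _ = k h * (∫⁻ y, k y * (w x + w (x + y)) ∂μ +
            ∫⁻ y, k y * (w (x + h) + w (x + h + y)) ∂μ) := by
          rw [lintegral_const_mul _ (by fun_prop), lintegral_add_left (by fun_prop)]
      _ ≤ k h * (A * w x + A * w (x + h)) := by gcongr <;> exact hA _
      _ = _ := by ring
  calc _ ≤ ∫⁻ h, A * (k h * (w x + w (x + h))) ∂μ := lintegral_mono inner_le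
    _ = A * ∫⁻ h, k h * (w x + w (x + h)) ∂μ := lintegral_const_mul _ (by fun_prop)
    _ ≤ A * (A * w x) := by gcongr; exact hA x
    _ = A ^ 2 * w x := by ring

variable {E F : Type*} [NormedAddCommGroup E] [NormedSpace ℝ E] [FiniteDimensional ℝ E]
  [Nontrivial E] [MeasurableSpace E] [BorelSpace E] (μ : Measure E) [μ.IsAddHaarMeasure]
  [NormedAddCommGroup F] [NormedSpace ℝ F] {a : ℝ}

lemma integrable_dampedPow (ha : -(finrank ℝ E + 2 : ℝ) < a) (ha' : a < -(finrank ℝ E : ℝ)) :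
    Integrable (dampedPow a : E → ℝ) μ := by
  have dim_eq : ((finrank ℝ E - 1 : ℕ) : ℝ) + 1 = finrank ℝ E := by
    exact_mod_cast Nat.sub_add_cancel (finrank_pos (R := ℝ) (M := E))
  exact (integrable_fun_norm_addHaar μ (f := fun r ↦ min 1 r ^ 2 * r ^ a)).mpr
    (integrableOn_Ioi_pow_mul_min_sq_mul_rpow (by linarith) (by linarith))

lemma exists_lintegral_dampedPow_mul_bracketPow_le (ha : -(finrank ℝ E + 2 : ℝ) < a)
    (ha' : a < -(finrank ℝ E : ℝ)) :
    ∃ A : ℝ≥0∞, A ≠ ∞ ∧ ∀ x : E,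
      ∫⁻ h, .ofReal (dampedPow a h) *
        (.ofReal (bracketPow a x) + .ofReal (bracketPow a (x + h))) ∂μ ≤
          A * .ofReal (bracketPow a x) := by
  have a_nonpos : a ≤ 0 := by linarith [(finrank ℝ E).cast_nonneg (α := ℝ)]
  set k : E → ℝ≥0∞ := fun h ↦ .ofReal (dampedPow a h) with hk
  set w : E → ℝ≥0∞ := fun x ↦ .ofReal (bracketPow a x) with hw
  have k_fin : ∫⁻ h, k h ∂μ ≠ ∞ := (integrable_dampedPow μ ha ha').lintegral_lt_top.ne
  have w_fin : ∫⁻ h, w h ∂μ ≠ ∞ := by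
    simpa only [hw, bracketPow, neg_neg] using
      (finite_integral_one_add_norm (μ := μ) (r := -a) (by linarith)).ne
  set c : ℝ≥0∞ := .ofReal (2 ^ (-a)) with hc
  have pointwise (x h : E) : k h * w (x + h) ≤ c * w x * (k h + w (x + h)) := by
    have := dampedPow_nonneg a h
    have := bracketPow_nonneg a x
    simp only [hk, hw, hc]
    rw [← ENNReal.ofReal_mul (by positivity), ← ENNReal.ofReal_mul (by positivity),
      ← ENNReal.ofReal_add (by positivity) (bracketPow_nonneg _ _),
      ← ENNReal.ofReal_mul (by positivity)]
    exact ENNReal.ofReal_le_ofReal (dampedPow_mul_bracketPow_le a_nonpos x h)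
  refine ⟨∫⁻ h, k h ∂μ + c * (∫⁻ h, k h ∂μ + ∫⁻ h, w h ∂μ), by finiteness, fun x ↦ ?_⟩
  calc ∫⁻ h, k h * (w x + w (x + h)) ∂μ
      ≤ ∫⁻ h, (k h * w x + c * w x * (k h + w (x + h))) ∂μ :=
        lintegral_mono fun h ↦ (mul_add _ _ _).trans_le (add_le_add_right (pointwise x h) _)
    _ = (∫⁻ h, k h ∂μ) * w x + c * w x * (∫⁻ h, k h ∂μ + ∫⁻ h, w h ∂μ) := by
        rw [lintegral_add_left (by fun_prop), lintegral_mul_const _ (by fun_prop),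
          lintegral_const_mul _ (by fun_prop), lintegral_add_left (by fun_prop),
          lintegral_add_left_eq_self w x]
    _ = _ := by ring

theorem exists_lintegral_sq_norm_fwdDiff_fwdDiff_le (ha : -(finrank ℝ E + 2 : ℝ) < a)
    (ha' : a < -(finrank ℝ E : ℝ)) {f : E → F} (hf : ContDiff ℝ 2 f) {K : ℝ}
    (hK : ∀ k ≤ 2, ∀ u, ‖iteratedFDeriv ℝ k f u‖ ^ 2 ≤ K * bracketPow a u) :
    ∃ C : ℝ, 0 < C ∧ ∀ x,
      ∫⁻ h, ∫⁻ y, .ofReal (‖Δ_[h] (Δ_[y] f) x‖ ^ 2 * ‖h‖ ^ a * ‖y‖ ^ a) ∂μ ∂μ ≤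
        .ofReal (C * bracketPow a x) := by
  have one_le_dim : (1 : ℝ) ≤ finrank ℝ E := by
    exact_mod_cast finrank_pos (R := ℝ) (M := E)
  obtain ⟨A, A_fin, hA⟩ := exists_lintegral_dampedPow_mul_bracketPow_le μ ha ha'
  set c : ℝ := (2 ^ (-a)) ^ 2 * K
  set k : E → ℝ≥0∞ := fun h ↦ .ofReal (dampedPow a h)
  set w : E → ℝ≥0∞ := fun x ↦ .ofReal (bracketPow a x)
  refine ⟨(.ofReal c * A ^ 2 : ℝ≥0∞).toReal + 1, by positivity, fun x ↦ ?_⟩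
  calc _ ≤ ∫⁻ h, ∫⁻ y, .ofReal c *
        (k h * k y * (w x + w (x + y) + (w (x + h) + w (x + h + y)))) ∂μ ∂μ :=
        lintegral_mono fun h ↦ lintegral_mono fun y ↦
          ofReal_sq_norm_fwdDiff_fwdDiff_mul_rpow_le (by linarith) hf hK h y x
    _ = .ofReal c * ∫⁻ h, ∫⁻ y,
        k h * k y * (w x + w (x + y) + (w (x + h) + w (x + h + y))) ∂μ ∂μ := by
        simp only [lintegral_const_mul' _ _ ENNReal.ofReal_ne_top]
    _ ≤ .ofReal c * (A ^ 2 * w x) := by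
        gcongr
        exact lintegral_lintegral_kernel_mul_le (by fun_prop) (by fun_prop) hA x
    _ = .ofReal (.ofReal c * A ^ 2 : ℝ≥0∞).toReal * w x := by
        rw [ENNReal.ofReal_toReal (by finiteness), mul_assoc]
    _ ≤ .ofReal ((.ofReal c * A ^ 2 : ℝ≥0∞).toReal + 1) * w x := by
        gcongr
        exact le_add_of_nonneg_right zero_le_one
    _ = _ := (ENNReal.ofReal_mul (by positivity)).symm

end Integration

section Gaussian

lemma exp_neg_sq_le (x : ℝ) : exp (-x ^ 2) ≤ 2 / (1 + x ^ 2) ^ 2 := by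
  rw [exp_neg, ← one_div, div_le_div_iff₀ (exp_pos _) (by positivity)]
  linarith [quadratic_le_exp_of_nonneg (sq_nonneg x), sq_nonneg x]

lemma sq_mul_exp_neg_sq_le {a x p C : ℝ} (ha : -4 ≤ a) (hp : |p| ≤ C * (1 + x ^ 2)) :
    (p * exp (-x ^ 2)) ^ 2 ≤ 16 * C ^ 2 * bracketPow a x := by
  have rational_bound : |p * exp (-x ^ 2)| ≤ 2 * C / (1 + x ^ 2) :=
    calc |p * exp (-x ^ 2)| = |p| * exp (-x ^ 2) := by rw [abs_mul, abs_exp]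
      _ ≤ C * (1 + x ^ 2) * (2 / (1 + x ^ 2) ^ 2) :=
        mul_le_mul hp (exp_neg_sq_le x) (exp_pos _).le ((abs_nonneg p).trans hp)
      _ = 2 * C / (1 + x ^ 2) := by field_simp
  have bracket_sq_le : (1 + |x|) ^ 2 ≤ 2 * (1 + x ^ 2) := by
    simpa using add_sq_le (a := 1) (b := |x|)
  calc (p * exp (-x ^ 2)) ^ 2 = |p * exp (-x ^ 2)| ^ 2 := (sq_abs _).symm
    _ ≤ (2 * C / (1 + x ^ 2)) ^ 2 := by gcongr
    _ = 16 * C ^ 2 / (2 * (1 + x ^ 2)) ^ 2 := by field_simp; ring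
    _ ≤ 16 * C ^ 2 / ((1 + |x|) ^ 2) ^ 2 := by gcongr
    _ = 16 * C ^ 2 * (1 + |x|) ^ (-4 : ℝ) := by
      rw [← pow_mul, rpow_neg (by positivity), div_eq_mul_inv]
      norm_cast
    _ ≤ 16 * C ^ 2 * bracketPow a x := by
      unfold bracketPow
      gcongr
      exact rpow_le_rpow_of_exponent_le (le_add_of_nonneg_right (abs_nonneg x)) ha

lemma hasDerivAt_exp_neg_sq (x : ℝ) :
    HasDerivAt (fun x : ℝ ↦ exp (-x ^ 2)) (-2 * x * exp (-x ^ 2)) x := by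
  convert ((hasDerivAt_pow 2 x).fun_neg).exp using 1
  norm_num
  ring

lemma iteratedDeriv_one_exp_neg_sq :
    iteratedDeriv 1 (fun x : ℝ ↦ exp (-x ^ 2)) = fun x ↦ -2 * x * exp (-x ^ 2) := by
  rw [iteratedDeriv_one]
  exact funext fun x ↦ (hasDerivAt_exp_neg_sq x).deriv

lemma iteratedDeriv_two_exp_neg_sq :
    iteratedDeriv 2 (fun x : ℝ ↦ exp (-x ^ 2)) = fun x ↦ (4 * x ^ 2 - 2) * exp (-x ^ 2) := by
  rw [iteratedDeriv_succ, iteratedDeriv_one_exp_neg_sq]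
  ext1 x
  refine (((hasDerivAt_id x).const_mul (-2)).fun_mul (hasDerivAt_exp_neg_sq x)).deriv.trans ?_
  simp only [id_eq]
  ring

lemma sq_norm_iteratedFDeriv_exp_neg_sq_le {a : ℝ} (ha : -4 ≤ a) {k : ℕ} (hk : k ≤ 2) (x : ℝ) :
    ‖iteratedFDeriv ℝ k (fun x : ℝ ↦ exp (-x ^ 2)) x‖ ^ 2 ≤ 16 * 4 ^ 2 * bracketPow a x := by
  rw [norm_iteratedFDeriv_eq_norm_iteratedDeriv, norm_eq_abs, sq_abs]
  interval_cases k
  · rw [iteratedDeriv_zero, ← one_mul (exp _)]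
    exact sq_mul_exp_neg_sq_le ha (by rw [abs_one]; linarith [sq_nonneg x])
  · rw [iteratedDeriv_one_exp_neg_sq]
    exact sq_mul_exp_neg_sq_le ha (abs_le.mpr ⟨by nlinarith, by nlinarith⟩)
  · rw [iteratedDeriv_two_exp_neg_sq]
    exact sq_mul_exp_neg_sq_le ha (abs_le.mpr ⟨by nlinarith, by nlinarith⟩)

lemma fwdDiff_fwdDiff_exp_neg_sq (h y x : ℝ) :
    Δ_[h] (Δ_[y] fun x : ℝ ↦ exp (-x ^ 2)) x =
      exp (-(x + y + h) ^ 2) - exp (-(x + h) ^ 2) - exp (-(x + y) ^ 2) + exp (-x ^ 2) := by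
  simp only [fwdDiff, add_right_comm x y h]
  ring

end Gaussian

theorem stmt8_general (H : ℝ) (hH : H ∈ Set.Ioo (-1 / 2 : ℝ) (1 / 2)) :
    ∃ C : ℝ, 0 < C ∧ ∀ x : ℝ,
      (∫⁻ h : ℝ, ∫⁻ y : ℝ, ENNReal.ofReal
          (|Real.exp (-(x + y + h) ^ 2) - Real.exp (-(x + h) ^ 2)
              - Real.exp (-(x + y) ^ 2) + Real.exp (-x ^ 2)| ^ 2
            * |h| ^ (2 * H - 2) * |y| ^ (2 * H - 2)))
        ≤ ENNReal.ofReal (C * (max 1 |x|) ^ (2 * H - 2)) := by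
  obtain ⟨hH₁, hH₂⟩ := hH
  set a : ℝ := 2 * H - 2
  have lower : -3 < a := by simp only [a]; linarith
  have upper : a < -1 := by simp only [a]; linarith
  obtain ⟨C, C_pos, hC⟩ := exists_lintegral_sq_norm_fwdDiff_fwdDiff_le volume
    (by rw [finrank_self]; norm_num; exact lower) (by rw [finrank_self]; exact_mod_cast upper)
    (f := fun x : ℝ ↦ exp (-x ^ 2)) (by fun_prop)
    fun k hk u ↦ sq_norm_iteratedFDeriv_exp_neg_sq_le (a := a) (by linarith) hk u
  refine ⟨C, C_pos, fun x ↦ ?_⟩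
  simp only [← norm_eq_abs, ← fwdDiff_fwdDiff_exp_neg_sq]
  refine (hC x).trans (ENNReal.ofReal_le_ofReal ?_)
  gcongr
  exact bracketPow_le_max_rpow (by linarith) x

/-- For `H ∈ (1/4,1/2)`, `□(x,y,h) = e^{-(x+y+h)²} - e^{-(x+h)²} - e^{-(x+y)²} + e^{-x²}`
and `F(x) = ∫∫ |□(x,y,h)|² |h|^{2H-2} |y|^{2H-2} dy dh`, one has
`F(x) ≤ C · min(1, |x|^{2H-2})` (written as `(max 1 |x|)^{2H-2}`). -/
theorem stmt8 (H : ℝ) (hH : H ∈ Set.Ioo (1 / 4 : ℝ) (1 / 2)) :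
    ∃ C : ℝ, 0 < C ∧ ∀ x : ℝ,
      (∫⁻ h : ℝ, ∫⁻ y : ℝ, ENNReal.ofReal
          (|Real.exp (-(x + y + h) ^ 2) - Real.exp (-(x + h) ^ 2)
              - Real.exp (-(x + y) ^ 2) + Real.exp (-x ^ 2)| ^ 2
            * |h| ^ (2 * H - 2) * |y| ^ (2 * H - 2)))
        ≤ ENNReal.ofReal (C * (max 1 |x|) ^ (2 * H - 2)) :=
  stmt8_general H ⟨by linarith [hH.1], hH.2⟩
end
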